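/- arXiv:2603.02113 — 4 statements merged into one kernel-verified Lean document; each statement's English description precedes it below -/
import Mathlib

section
/- Let (N, (A_i)_{i∈N}, (u_i)_{i∈N}) be a finite simultaneous-move game and let p = (p_i)_{i∈N} be a marginal strategy profile. Then p is compatible with a correlated equilibrium (i.e., there exists a correlated equilibrium q ∈ Δ(∏_i A_i) whose marginal on each A_i equals p_i) if and only if p is unexploitable by action-wise transfer schemes (i.e., there do not exist fee functions f_i : A_i → ℝ and stochastic kernels η_i : A_i → Δ(A_i), one pair for each player i, such that (1) for every action profile a ∈ ∏_i A_i, Σ_{i∈N} [u_i(a) + f_i(a_i)] ≤ Σ_{i∈N} Σ_{a_i'∈A_i} η_i(a_i, a_i') u_i(a_i', a_{-i}), and (2) Σ_{i∈N} Σ_{a_i∈A_i} p_i(a_i) f_i(a_i) > 0). -/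
open Finset

variable {N : Type*} [Fintype N] [Nonempty N] [DecidableEq N]
  {A : N → Type*} [∀ i, Fintype (A i)] [∀ i, Nonempty (A i)] [∀ i, DecidableEq (A i)]

/-- `p` is a marginal strategy profile: each `p i` is a probability distribution on `A i`. -/
def IsMarginalProfile (p : ∀ i, A i → ℝ) : Prop :=
  (∀ i (b : A i), 0 ≤ p i b) ∧ ∀ i, ∑ b : A i, p i b = 1

/-- `q` is a correlated equilibrium of the game with utilities `u`. -/
def IsCorrelatedEq (u : ∀ i : N, (∀ j, A j) → ℝ) (q : (∀ j, A j) → ℝ) : Prop :=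
  (∀ a, 0 ≤ q a) ∧ (∑ a : ∀ j, A j, q a = 1) ∧
    ∀ (i : N) (b b' : A i),
      0 ≤ ∑ a : ∀ j, A j,
            (if a i = b then q a * (u i a - u i (Function.update a i b')) else 0)

/-- The marginal of the joint distribution `q` on `A i`. -/
def marg (q : (∀ j, A j) → ℝ) (i : N) (b : A i) : ℝ :=
  ∑ a : ∀ j, A j, if a i = b then q a else 0

/-- Each row `η i b` is a probability distribution on `A i` (a stochastic kernel). -/
def IsKernel (η : ∀ i, A i → A i → ℝ) : Prop :=
  ∀ i (b : A i), (∀ b' : A i, 0 ≤ η i b b') ∧ ∑ b' : A i, η i b b' = 1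

/-!
Consider the zero-sum game in which one side chooses a joint distribution `q` and the other a
transfer scheme `(f, η)`, the payoff to the latter being

  `∑ i, ∑ b, (p i b - marg q i b) * f i b` + the total expected gain from deviating by `η`.

Some `q` holds this payoff to at most `0` against every scheme iff it is a correlated equilibrium
with marginals `p`: obedient kernels pin down the marginals, and zero fees give the incentive
constraints. By the minimax theorem such a `q` exists iff every scheme has a nonpositive payoff at
some pure action profile. Adding a constant to the fees does not change the payoff, because each
`p i` has total mass `1`; choosing the constant so that the expected fees `∑ i, ∑ b, p i b * f i b`
equal the minimal payoff turns a scheme with positive payoff everywhere into an exploiting one.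
-/

section Minimax

theorem exists_forall_le_of_forall_exists_le {E F β : Type*}
    [TopologicalSpace E] [AddCommGroup E] [Module ℝ E] [IsTopologicalAddGroup E]
    [ContinuousSMul ℝ E] [TopologicalSpace F] [AddCommGroup F] [Module ℝ F]
    [IsTopologicalAddGroup F] [ContinuousSMul ℝ F] [LinearOrder β] [DenselyOrdered β]
    {X : Set E} {Y : Set F} {f : E → F → β} {t : β}
    (hX : X.Nonempty) (hX_conv : Convex ℝ X) (hX_comp : IsCompact X) (hY_conv : Convex ℝ Y)
    (hlsc : ∀ y ∈ Y, LowerSemicontinuousOn (f · y) X)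
    (hconvex : ∀ y ∈ Y, QuasiconvexOn ℝ X (f · y))
    (husc : ∀ x ∈ X, UpperSemicontinuousOn (f x) Y)
    (hconcave : ∀ x ∈ X, QuasiconcaveOn ℝ Y (f x))
    (h : ∀ y ∈ Y, ∃ x ∈ X, f x y ≤ t) :
    ∃ x ∈ X, ∀ y ∈ Y, f x y ≤ t := by
  by_contra! hno
  have hempty : X ∩ ⋂ y ∈ Y, (f · y) ⁻¹' Set.Iic t = ∅ := by
    simpa [Set.eq_empty_iff_forall_notMem] using hno
  obtain ⟨s, hs⟩ := (LowerSemicontinuousOn.inter_biInter_preimage_Iic_eq_empty_iff_exists_finset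
    (f := fun y x => f x y) hX_comp hlsc).1 hempty
  obtain ⟨y, hy, hlt⟩ : ∃ y ∈ Y, ∀ x ∈ X, t < f x y :=
    Sion.exists_lt_iInf_of_lt_iInf_of_finite hX hX_comp hlsc hconvex hY_conv husc hconcave
      hX_conv (s.finite_toSet.image Subtype.val) (by simp) (by simpa using hs)
  obtain ⟨x, hx, hle⟩ := h y hy
  exact (hlt x hx).not_ge hle

variable {ι : Type*} [Fintype ι]

theorem dotProduct_pos_of_mem_stdSimplex {q z : ι → ℝ} (hq : q ∈ stdSimplex ℝ ι)
    (hz : ∀ a, 0 < z a) : 0 < q ⬝ᵥ z := by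
  obtain ⟨a, -, ha⟩ : ∃ a ∈ univ, 0 < q a := exists_lt_of_sum_lt (by simp [hq.2])
  exact sum_pos' (fun b _ => mul_nonneg (hq.1 b) (hz b).le) ⟨a, mem_univ a, mul_pos ha (hz a)⟩

theorem exists_mem_stdSimplex_forall_dotProduct_nonpos_iff [Nonempty ι] {Z : Set (ι → ℝ)}
    (hZ : Convex ℝ Z) :
    (∃ q ∈ stdSimplex ℝ ι, ∀ z ∈ Z, q ⬝ᵥ z ≤ 0) ↔ ∀ z ∈ Z, ∃ a, z a ≤ 0 := by
  classical
  constructor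
  · rintro ⟨q, hq, hqZ⟩ z hz
    by_contra! hpos
    exact (hqZ z hz).not_gt (dotProduct_pos_of_mem_stdSimplex hq hpos)
  · intro h
    have hne : (stdSimplex ℝ ι).Nonempty := ⟨_, single_mem_stdSimplex ℝ (Classical.arbitrary ι)⟩
    have hconv := convex_stdSimplex ℝ ι
    refine exists_forall_le_of_forall_exists_le hne hconv (isCompact_stdSimplex ℝ ι) hZ
      (fun z _ => Continuous.lowerSemicontinuous (by fun_prop) |>.lowerSemicontinuousOn _)
      (fun z _ => ((dotProductBilin ℝ ℝ).flip z).convexOn hconv |>.quasiconvexOn)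
      (fun q _ => Continuous.upperSemicontinuous (by fun_prop) |>.upperSemicontinuousOn _)
      (fun q _ => (dotProductBilin ℝ ℝ q).concaveOn hZ |>.quasiconcaveOn) fun z hz => ?_
    obtain ⟨a, ha⟩ := h z hz
    exact ⟨Pi.single a 1, single_mem_stdSimplex ℝ a, by simpa using ha⟩

end Minimax

section DeviationGain

omit [Nonempty N] [∀ i, Nonempty (A i)]

theorem sum_mul_comp_eval (w : (∀ j, A j) → ℝ) (i : N) (φ : A i → ℝ) :
    ∑ a, w a * φ (a i) = ∑ b, marg w i b * φ b := by
  simp only [marg, sum_mul, ite_mul, zero_mul]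
  rw [sum_comm]
  simp

/-- `deviationGain u q i b b'` is the expected gain of player `i` from playing `b'` instead of a
recommended `b` when recommendations are drawn from `q`. It is not conditioned on `b` being
recommended, so no division by `marg q i b` occurs. -/
def deviationGain (u : N → (∀ j, A j) → ℝ) (q : (∀ j, A j) → ℝ) (i : N) (b b' : A i) : ℝ :=
  marg (fun a => q a * (u i (Function.update a i b') - u i a)) i b

theorem deviationGain_self (u : N → (∀ j, A j) → ℝ) (q : (∀ j, A j) → ℝ) (i : N) (b : A i) :
    deviationGain u q i b b = 0 := by
  refine sum_eq_zero fun a _ => ?_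
  split_ifs with hab
  · simp [← hab]
  · rfl

theorem isCorrelatedEq_iff {u : N → (∀ j, A j) → ℝ} {q : (∀ j, A j) → ℝ} :
    IsCorrelatedEq u q ↔
      q ∈ stdSimplex ℝ (∀ j, A j) ∧ ∀ i (b b' : A i), deviationGain u q i b b' ≤ 0 := by
  have incentive_iff (i : N) (b b' : A i) :
      0 ≤ ∑ a : ∀ j, A j, (if a i = b then q a * (u i a - u i (Function.update a i b')) else 0) ↔
        deviationGain u q i b b' ≤ 0 := by
    rw [deviationGain, marg, ← neg_nonneg, ← sum_neg_distrib]
    simp only [neg_ite, neg_zero, ← mul_neg, neg_sub]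
  simp only [IsCorrelatedEq, incentive_iff, stdSimplex, Set.mem_ofPred_eq, and_assoc]

/-- The deviation rule of all players under which player `i` replaces the recommendation `b` by `b'`
and every other recommendation, to any player, is obeyed. -/
def deviateAt (i : N) (b b' : A i) (j : N) : A j → A j :=
  Function.update (β := fun k => A k → A k) (fun _ => id) i (Function.update id b b') j

theorem sum_deviationGain_deviateAt (u : N → (∀ j, A j) → ℝ) (q : (∀ j, A j) → ℝ) (i : N)
    (b b' : A i) :
    ∑ j, ∑ c, deviationGain u q j c (deviateAt i b b' j c) = deviationGain u q i b b' := by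
  rw [Fintype.sum_eq_single i, Fintype.sum_eq_single b]
  · simp [deviateAt]
  · intro c hc
    simp [deviateAt, hc, deviationGain_self]
  · intro j hj
    simp [deviateAt, hj, deviationGain_self]

end DeviationGain

section Kernel

omit [Fintype N] [Nonempty N] [DecidableEq N] [∀ i, Nonempty (A i)]

omit [∀ i, DecidableEq (A i)] in
theorem convex_setOf_isKernel : Convex ℝ {η : ∀ i, A i → A i → ℝ | IsKernel η} := by
  have hpi : {η : ∀ i, A i → A i → ℝ | IsKernel η} =
      Set.univ.pi fun i => Set.univ.pi fun _ => stdSimplex ℝ (A i) := by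
    ext η
    simp [IsKernel, stdSimplex]
  rw [hpi]
  exact convex_pi fun i _ => convex_pi fun _ _ => convex_stdSimplex ℝ (A i)

/-- The deterministic stochastic kernels in which player `i` plays `σ i b` at `b`. -/
def pureKernel (σ : ∀ i, A i → A i) (i : N) (b : A i) : A i → ℝ :=
  Pi.single (σ i b) 1

theorem isKernel_pureKernel (σ : ∀ i, A i → A i) : IsKernel (pureKernel σ) :=
  fun i b => single_mem_stdSimplex ℝ (σ i b)

theorem sum_pureKernel_mul (σ : ∀ i, A i → A i) (i : N) (b : A i) (g : A i → ℝ) :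
    ∑ b', pureKernel σ i b b' * g b' = g (σ i b) := by
  simp [pureKernel, Pi.single_apply]

end Kernel

section SchemePayoff

omit [Nonempty N] [∀ i, Nonempty (A i)] [∀ i, DecidableEq (A i)]

/-- The payoff vector of the transfer scheme `(f, η)`, indexed by action profiles: expected fees
under `p`, minus the fees charged at the profile, plus the total gain from deviating by `η`. The
last term is written so as to be linear in `η`; it is the actual gain only if `η` is a kernel. -/
def schemePayoff (u : N → (∀ j, A j) → ℝ) (p : ∀ i, A i → ℝ) :
    (∀ i, A i → ℝ) × (∀ i, A i → A i → ℝ) →ₗ[ℝ] (∀ j, A j) → ℝ where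
  toFun s a := ∑ i, ∑ b, p i b * s.1 i b - ∑ i, s.1 i (a i) +
    ∑ i, ∑ b', s.2 i (a i) b' * (u i (Function.update a i b') - u i a)
  map_add' s t := by
    ext a
    simp only [Prod.fst_add, Prod.snd_add, Pi.add_apply, mul_add, add_mul, sum_add_distrib]
    ring
  map_smul' c s := by
    ext a
    simp only [Prod.smul_fst, Prod.smul_snd, Pi.smul_apply, smul_eq_mul, mul_add, mul_sub, mul_sum,
      RingHom.id_apply, mul_left_comm c, mul_assoc]

theorem schemePayoff_apply (u : N → (∀ j, A j) → ℝ) (p f : ∀ i, A i → ℝ)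
    (η : ∀ i, A i → A i → ℝ) (a : ∀ j, A j) :
    schemePayoff u p (f, η) a = ∑ i, ∑ b, p i b * f i b - ∑ i, f i (a i) +
      ∑ i, ∑ b', η i (a i) b' * (u i (Function.update a i b') - u i a) :=
  rfl

theorem schemePayoff_apply_of_isKernel (u : N → (∀ j, A j) → ℝ) (p f : ∀ i, A i → ℝ)
    {η : ∀ i, A i → A i → ℝ} (hη : IsKernel η) (a : ∀ j, A j) :
    schemePayoff u p (f, η) a = ∑ i, ∑ b, p i b * f i b +
      (∑ i, ∑ b', η i (a i) b' * u i (Function.update a i b') - ∑ i, (u i a + f i (a i))) := by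
  simp only [schemePayoff_apply, mul_sub, sum_sub_distrib, ← sum_mul, (hη _ _).2, one_mul,
    sum_add_distrib]
  ring

theorem schemePayoff_add_const (u : N → (∀ j, A j) → ℝ) {p : ∀ i, A i → ℝ}
    (hp : ∀ i, ∑ b, p i b = 1) (f : ∀ i, A i → ℝ) (η : ∀ i, A i → A i → ℝ) (c : ℝ) :
    schemePayoff u p (fun i b => f i b + c, η) = schemePayoff u p (f, η) := by
  ext a
  simp only [schemePayoff_apply, mul_add, sum_add_distrib, ← sum_mul, hp, one_mul]
  ring

/-- The set of payoff vectors of the transfer schemes `(f, η)` in which `η` is a stochastic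
kernel. -/
def schemePayoffs (u : N → (∀ j, A j) → ℝ) (p : ∀ i, A i → ℝ) : Set ((∀ j, A j) → ℝ) :=
  schemePayoff u p '' {s | IsKernel s.2}

theorem convex_schemePayoffs (u : N → (∀ j, A j) → ℝ) (p : ∀ i, A i → ℝ) :
    Convex ℝ (schemePayoffs u p) :=
  (convex_setOf_isKernel.linear_preimage (LinearMap.snd ℝ _ _)).linear_image _

end SchemePayoff

section CorrelatedEquilibrium

omit [Nonempty N] [∀ i, Nonempty (A i)]

theorem dotProduct_schemePayoff (u : N → (∀ j, A j) → ℝ) (p f : ∀ i, A i → ℝ)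
    (η : ∀ i, A i → A i → ℝ) {q : (∀ j, A j) → ℝ} (hq : ∑ a, q a = 1) :
    q ⬝ᵥ schemePayoff u p (f, η) = ∑ i, ∑ b, (p i b - marg q i b) * f i b +
      ∑ i, ∑ b, ∑ b', η i b b' * deviationGain u q i b b' := by
  have fees : ∑ a, q a * ∑ i, f i (a i) = ∑ i, ∑ b, marg q i b * f i b := by
    simp only [mul_sum, ← sum_mul_comp_eval]
    exact sum_comm
  have gains : ∑ a, q a * ∑ i, ∑ b', η i (a i) b' * (u i (Function.update a i b') - u i a) =
      ∑ i, ∑ b, ∑ b', η i b b' * deviationGain u q i b b' := by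
    simp only [mul_sum]
    rw [sum_comm]
    refine sum_congr rfl fun i _ => sum_comm.trans <| .trans (sum_congr rfl fun b' _ => ?_) sum_comm
    simp only [mul_comm (η i _ b'), deviationGain, ← sum_mul_comp_eval _ i fun b => η i b b',
      mul_assoc]
  simp only [dotProduct, schemePayoff_apply, mul_add, sum_add_distrib, gains]
  simp only [mul_sub, sub_mul, sum_sub_distrib, fees, ← sum_mul, hq, one_mul]

theorem forall_dotProduct_schemePayoffs_nonpos_iff {u : N → (∀ j, A j) → ℝ}
    {p : ∀ i, A i → ℝ} {q : (∀ j, A j) → ℝ} (hq : ∑ a, q a = 1) :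
    (∀ z ∈ schemePayoffs u p, q ⬝ᵥ z ≤ 0) ↔
      (∀ i (b b' : A i), deviationGain u q i b b' ≤ 0) ∧ ∀ i (b : A i), marg q i b = p i b := by
  simp only [schemePayoffs, Set.forall_mem_image, Set.mem_ofPred_eq, Prod.forall,
    dotProduct_schemePayoff u p _ _ hq]
  constructor
  · refine fun h => ⟨fun i b b' => ?_, fun i b => ?_⟩
    · have hle := h 0 (pureKernel (deviateAt i b b')) (isKernel_pureKernel _)
      simpa [sum_pureKernel_mul, sum_deviationGain_deviateAt] using hle
    · have hle := h (fun i b => p i b - marg q i b) (pureKernel fun _ => id) (isKernel_pureKernel _)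
      have hsq : ∑ i, ∑ b, (p i b - marg q i b) ^ 2 ≤ 0 := by
        simpa [sum_pureKernel_mul, deviationGain_self, sq] using hle
      have hterm : (p i b - marg q i b) ^ 2 ≤ ∑ i, ∑ b, (p i b - marg q i b) ^ 2 :=
        (single_le_sum (f := fun b => (p i b - marg q i b) ^ 2) (fun _ _ => sq_nonneg _)
          (mem_univ b)).trans
        (single_le_sum (f := fun i => ∑ b, (p i b - marg q i b) ^ 2)
          (fun _ _ => sum_nonneg fun _ _ => sq_nonneg _) (mem_univ i))
      exact (sub_eq_zero.1 (sq_nonpos_iff _ |>.1 (hterm.trans hsq))).symm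
  · rintro ⟨hgain, hmarg⟩ f η hη
    simp only [hmarg, sub_self, zero_mul, sum_const_zero, zero_add]
    exact sum_nonpos fun i _ => sum_nonpos fun b _ => sum_nonpos fun b' _ =>
      mul_nonpos_of_nonneg_of_nonpos ((hη i b).1 b') (hgain i b b')

theorem exists_isCorrelatedEq_marg_eq_iff {u : N → (∀ j, A j) → ℝ} {p : ∀ i, A i → ℝ} :
    (∃ q : (∀ j, A j) → ℝ, IsCorrelatedEq u q ∧ ∀ i (b : A i), marg q i b = p i b) ↔
      ∃ q ∈ stdSimplex ℝ (∀ j, A j), ∀ z ∈ schemePayoffs u p, q ⬝ᵥ z ≤ 0 := by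
  refine exists_congr fun q => ?_
  rw [isCorrelatedEq_iff, and_assoc]
  exact and_congr_right fun hq => (forall_dotProduct_schemePayoffs_nonpos_iff hq.2).symm

end CorrelatedEquilibrium

section Exploitability

omit [∀ i, DecidableEq (A i)]

omit [DecidableEq N] [∀ i, Nonempty (A i)] in
theorem exists_sum_mul_add_const_eq {p : ∀ i, A i → ℝ} (hp : ∀ i, ∑ b, p i b = 1)
    (f : ∀ i, A i → ℝ) (t : ℝ) : ∃ c, ∑ i, ∑ b, p i b * (f i b + c) = t := by
  use (t - ∑ i, ∑ b, p i b * f i b) / Fintype.card N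
  simp only [mul_add, sum_add_distrib, ← sum_mul, hp, one_mul, sum_const, card_univ, nsmul_eq_mul]
  field_simp
  ring

/-- Exploitability of the marginal strategy profile `p` by an action-wise transfer scheme, with fees
`f` and stochastic kernels `η`. -/
def IsExploitable (u : N → (∀ j, A j) → ℝ) (p : ∀ i, A i → ℝ) : Prop :=
  ∃ (f : ∀ i, A i → ℝ) (η : ∀ i, A i → A i → ℝ), IsKernel η ∧
    (∀ a : ∀ j, A j, ∑ i, (u i a + f i (a i)) ≤
      ∑ i, ∑ b', η i (a i) b' * u i (Function.update a i b')) ∧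
    0 < ∑ i, ∑ b, p i b * f i b

theorem isExploitable_iff {u : N → (∀ j, A j) → ℝ} {p : ∀ i, A i → ℝ}
    (hp : ∀ i, ∑ b, p i b = 1) :
    IsExploitable u p ↔ ∃ z ∈ schemePayoffs u p, ∀ a, 0 < z a := by
  constructor
  · rintro ⟨f, η, hη, hle, hpos⟩
    refine ⟨schemePayoff u p (f, η), ⟨(f, η), hη, rfl⟩, fun a => ?_⟩
    rw [schemePayoff_apply_of_isKernel u p f hη]
    linarith [hle a]
  · rintro ⟨_, ⟨⟨f, η⟩, hη, rfl⟩, hpos⟩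
    obtain ⟨a₀, hmin⟩ := Finite.exists_min (schemePayoff u p (f, η))
    obtain ⟨c, hc⟩ := exists_sum_mul_add_const_eq hp f (schemePayoff u p (f, η) a₀)
    refine ⟨fun i b => f i b + c, η, hη, fun a => ?_, hc ▸ hpos a₀⟩
    have hle := hmin a
    rw [← schemePayoff_add_const u hp f η c, schemePayoff_apply_of_isKernel u p _ hη a,
      schemePayoff_add_const u hp, hc] at hle
    linarith

end Exploitability

theorem compatible_with_CE_iff_unexploitable
    (u : ∀ i : N, (∀ j, A j) → ℝ) (p : ∀ i, A i → ℝ) (hp : IsMarginalProfile p) :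
    (∃ q : (∀ j, A j) → ℝ, IsCorrelatedEq u q ∧ ∀ i (b : A i), marg q i b = p i b) ↔
      ¬ ∃ (f : ∀ i, A i → ℝ) (η : ∀ i, A i → A i → ℝ),
          IsKernel η ∧
          (∀ a : ∀ j, A j,
            ∑ i, (u i a + f i (a i)) ≤
              ∑ i, ∑ b' : A i, η i (a i) b' * u i (Function.update a i b')) ∧
          0 < ∑ i, ∑ b : A i, p i b * f i b := by
  calc
    _ ↔ ∃ q ∈ stdSimplex ℝ (∀ j, A j), ∀ z ∈ schemePayoffs u p, q ⬝ᵥ z ≤ 0 :=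
      exists_isCorrelatedEq_marg_eq_iff
    _ ↔ ∀ z ∈ schemePayoffs u p, ∃ a, z a ≤ 0 :=
      exists_mem_stdSimplex_forall_dotProduct_nonpos_iff (convex_schemePayoffs u p)
    _ ↔ ¬ ∃ z ∈ schemePayoffs u p, ∀ a, 0 < z a := by
      push Not
      rfl
    _ ↔ ¬ IsExploitable u p := not_congr (isExploitable_iff hp.2).symm
end

section
/- Let (N, (A_i)_{i∈N}, (u_i)_{i∈N}) be a finite simultaneous-move game, let q be a correlated equilibrium, and let p = (p_i)_{i∈N} be the marginal strategy profile of q (p_i(a_i) = Σ_{a_{-i}} q(a_i, a_{-i})). Then for any fee functions f_i : A_i → ℝ and stochastic kernels η_i : A_i → Δ(A_i) satisfying, for every action profile a ∈ ∏_i A_i, Σ_{i∈N} [u_i(a) + f_i(a_i)] ≤ Σ_{i∈N} Σ_{a_i'∈A_i} η_i(a_i, a_i') u_i(a_i', a_{-i}), it holds that Σ_{i∈N} Σ_{a_i∈A_i} p_i(a_i) f_i(a_i) ≤ 0. -/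
open Finset

variable {N : Type*} [Fintype N] [Nonempty N] [DecidableEq N]
  {A : N → Type*} [∀ i, Fintype (A i)] [∀ i, Nonempty (A i)] [∀ i, DecidableEq (A i)]

/-! A mixture of deviations `b ↦ c` is unprofitable against a correlated equilibrium, because each
of them is. Averaging the fee condition over `q` therefore bounds the expected total fee by a sum of
nonpositive gains; each fee depends on one coordinate only, so its expectation under `q` is its
expectation under the marginal. -/

section

omit [Nonempty N] [∀ i, Nonempty (A i)]

theorem sum_marg_mul (w : (∀ j, A j) → ℝ) (i : N) (g : A i → ℝ) :
    ∑ b, marg w i b * g b = ∑ a, w a * g (a i) := by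
  simp only [marg, sum_mul, ite_mul, zero_mul]
  rw [sum_comm]
  simp only [sum_ite_eq, mem_univ, if_true]

namespace IsCorrelatedEq

variable {u : N → (∀ j, A j) → ℝ} {q : (∀ j, A j) → ℝ} {i : N} {κ : A i → A i → ℝ}

theorem sum_mul_sum_loss_nonneg (hq : IsCorrelatedEq u q) (hκ : ∀ b c, 0 ≤ κ b c) :
    0 ≤ ∑ a, q a * ∑ c, κ (a i) c * (u i a - u i (Function.update a i c)) := by
  -- The equilibrium inequality at `(b, c)` says that the signed weight `loss c` has a
  -- nonnegative marginal at `b`.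
  let loss (c : A i) (a : ∀ j, A j) : ℝ := q a * (u i a - u i (Function.update a i c))
  have marg_loss_nonneg (b c : A i) : 0 ≤ marg (loss c) i b := hq.2.2 i b c
  calc
    0 ≤ ∑ c, ∑ b, marg (loss c) i b * κ b c :=
      sum_nonneg fun c _ => sum_nonneg fun b _ => mul_nonneg (marg_loss_nonneg b c) (hκ b c)
    _ = ∑ c, ∑ a, loss c a * κ (a i) c :=
      sum_congr rfl fun c _ => sum_marg_mul (loss c) i fun b => κ b c
    _ = ∑ a, ∑ c, loss c a * κ (a i) c := sum_comm
    _ = ∑ a, q a * ∑ c, κ (a i) c * (u i a - u i (Function.update a i c)) := by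
      simp only [loss, mul_sum, mul_assoc, mul_comm (κ _ _)]

theorem sum_mul_kernel_deviation_le (hq : IsCorrelatedEq u q) (hκ : ∀ b c, 0 ≤ κ b c)
    (hκ_sum : ∀ b, ∑ c, κ b c = 1) :
    ∑ a, q a * ∑ c, κ (a i) c * u i (Function.update a i c) ≤ ∑ a, q a * u i a := by
  simpa only [mul_sub, sum_sub_distrib, ← sum_mul, hκ_sum, one_mul, sub_nonneg]
    using hq.sum_mul_sum_loss_nonneg hκ

end IsCorrelatedEq

end

theorem CE_marginals_unexploitable
    (u : ∀ i : N, (∀ j, A j) → ℝ) (q : (∀ j, A j) → ℝ) (hq : IsCorrelatedEq u q)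
    (p : ∀ i, A i → ℝ) (hpq : ∀ i (b : A i), p i b = marg q i b)
    (f : ∀ i, A i → ℝ) (η : ∀ i, A i → A i → ℝ) (hη : IsKernel η)
    (hIC : ∀ a : ∀ j, A j,
      ∑ i, (u i a + f i (a i)) ≤
        ∑ i, ∑ b' : A i, η i (a i) b' * u i (Function.update a i b')) :
    ∑ i, ∑ b : A i, p i b * f i b ≤ 0 := by
  have fee_le (a : ∀ j, A j) : ∑ i, f i (a i) ≤
      ∑ i, ∑ b', η i (a i) b' * u i (Function.update a i b') - ∑ i, u i a := by
    rw [le_sub_iff_add_le', ← sum_add_distrib]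
    exact hIC a
  calc
    ∑ i, ∑ b, p i b * f i b = ∑ i, ∑ a, q a * f i (a i) := by
      simp only [hpq, sum_marg_mul]
    _ = ∑ a, q a * ∑ i, f i (a i) := by
      simp only [mul_sum]
      exact sum_comm
    _ ≤ ∑ a, q a *
          (∑ i, ∑ b', η i (a i) b' * u i (Function.update a i b') - ∑ i, u i a) :=
      sum_le_sum fun a _ => mul_le_mul_of_nonneg_left (fee_le a) (hq.1 a)
    _ = ∑ i, (∑ a, q a * ∑ b', η i (a i) b' * u i (Function.update a i b') -
          ∑ a, q a * u i a) := by
      simp only [← sum_sub_distrib, ← mul_sub, mul_sum (s := (univ : Finset N))]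
      exact sum_comm
    _ ≤ 0 := sum_nonpos fun i _ => sub_nonpos.mpr <|
      hq.sum_mul_kernel_deviation_le (fun b => (hη i b).1) (fun b => (hη i b).2)
end

section
/- Let (N, (A_i)_{i∈N}, (u_i)_{i∈N}) be a finite simultaneous-move game and let p = (p_i)_{i∈N} be a Nash equilibrium. Then for every fee function f : ∏_i A_i → ℝ and stochastic kernels η_i : A_i → Δ(A_i) satisfying, for every action profile a ∈ ∏_i A_i, Σ_{i∈N} u_i(a) ≤ Σ_{i∈N} Σ_{a_i'∈A_i} η_i(a_i, a_i') u_i(a_i', a_{-i}) − f(a), it holds that Σ_{a∈∏_i A_i} (∏_{i∈N} p_i(a_i)) f(a) ≤ 0. -/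
open Finset

variable {N : Type*} [Fintype N] [Nonempty N] [DecidableEq N]
  {A : N → Type*} [∀ i, Fintype (A i)] [∀ i, Nonempty (A i)] [∀ i, DecidableEq (A i)]

/-- `p` is a Nash equilibrium of the game with utilities `u`. -/
def IsNashEq (u : ∀ i : N, (∀ j, A j) → ℝ) (p : ∀ i, A i → ℝ) : Prop :=
  ∀ (i : N) (b b' : A i), 0 < p i b →
    0 ≤ ∑ a : ∀ j, A j,
          (if a i = b then
            (∏ j ∈ Finset.univ.erase i, p j (a j)) * (u i a - u i (Function.update a i b'))
          else 0)

/-!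
The product distribution of a Nash equilibrium is a correlated equilibrium. In a correlated
equilibrium no recommendation `b` to player `i` makes a fixed deviation `b'` profitable; weighting
these inequalities by `η i b b'` and adding them up, the kernel `η i` does not raise the expected
payoff of player `i`. Summing over the players, the total expected gain from `η` is at most `0`,
while at every action profile this total gain is at least the fee.
-/

section

omit [Nonempty N] [∀ i, Nonempty (A i)]

/-- The expected amount that a player `i` with utility `v` gives up at the action profile `a` by
replacing `a i` with an action drawn from `κ (a i)`. Losses rather than payoffs are averaged, so
that nonnegative weights `κ` of any total mass give a combination of the one-action losses bounded
by the equilibrium conditions. -/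
def deviationLoss {i : N} (v : (∀ j, A j) → ℝ) (κ : A i → A i → ℝ) (a : ∀ j, A j) : ℝ :=
  ∑ b' : A i, κ (a i) b' * (v a - v (Function.update a i b'))

omit [Fintype N] [∀ i, DecidableEq (A i)] in
theorem deviationLoss_eq_sub {i : N} (v : (∀ j, A j) → ℝ) {κ : A i → A i → ℝ} {a : ∀ j, A j}
    (hκ : ∑ b' : A i, κ (a i) b' = 1) :
    deviationLoss v κ a = v a - ∑ b' : A i, κ (a i) b' * v (Function.update a i b') := by
  simp only [deviationLoss, mul_sub, sum_sub_distrib, ← sum_mul, hκ, one_mul]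

theorem sum_mul_deviationLoss {i : N} (q v : (∀ j, A j) → ℝ) (κ : A i → A i → ℝ) :
    ∑ a, q a * deviationLoss v κ a =
      ∑ b : A i, ∑ b' : A i, κ b b' * ∑ a : ∀ j, A j,
        (if a i = b then q a * (v a - v (Function.update a i b')) else 0) := by
  rw [← sum_fiberwise univ (fun a : ∀ j, A j => a i)]
  refine sum_congr rfl fun b _ => ?_
  simp only [← sum_filter, deviationLoss, mul_sum]
  rw [sum_comm]
  refine sum_congr rfl fun b' _ => sum_congr rfl fun a ha => ?_
  rw [(mem_filter.mp ha).2, mul_left_comm]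

theorem IsCorrelatedEq.sum_mul_deviationLoss_nonneg {u : N → (∀ j, A j) → ℝ}
    {q : (∀ j, A j) → ℝ} (hq : IsCorrelatedEq u q) {i : N} {κ : A i → A i → ℝ}
    (hκ : ∀ b b', 0 ≤ κ b b') :
    0 ≤ ∑ a, q a * deviationLoss (u i) κ a := by
  rw [sum_mul_deviationLoss]
  exact sum_nonneg fun b _ => sum_nonneg fun b' _ => mul_nonneg (hκ b b') (hq.2.2 i b b')

omit [∀ i, DecidableEq (A i)] in
theorem IsMarginalProfile.sum_prod_eq_one {p : ∀ i, A i → ℝ} (hp : IsMarginalProfile p) :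
    ∑ a : ∀ j, A j, ∏ j, p j (a j) = 1 := by
  rw [← Fintype.prod_sum, prod_eq_one fun i _ => hp.2 i]

theorem sum_ite_prod_mul {R : Type*} [CommSemiring R] (p : ∀ i, A i → R)
    (g : (∀ j, A j) → R) (i : N) (b : A i) :
    ∑ a : ∀ j, A j, (if a i = b then (∏ j, p j (a j)) * g a else 0) =
      p i b * ∑ a : ∀ j, A j,
        (if a i = b then (∏ j ∈ univ.erase i, p j (a j)) * g a else 0) := by
  simp only [← sum_filter, mul_sum]
  refine sum_congr rfl fun a ha => ?_
  rw [← mul_prod_erase univ (fun j => p j (a j)) (mem_univ i), (mem_filter.mp ha).2, mul_assoc]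

theorem IsNashEq.isCorrelatedEq_prod {u : N → (∀ j, A j) → ℝ} {p : ∀ i, A i → ℝ}
    (hN : IsNashEq u p) (hp : IsMarginalProfile p) :
    IsCorrelatedEq u fun a => ∏ j, p j (a j) := by
  refine ⟨fun a => prod_nonneg fun j _ => hp.1 j (a j), hp.sum_prod_eq_one, fun i b b' => ?_⟩
  rw [sum_ite_prod_mul]
  rcases (hp.1 i b).eq_or_lt with h_zero | h_pos
  · rw [← h_zero, zero_mul]
  · exact mul_nonneg h_pos.le (hN i b b' h_pos)

theorem nash_unexploitable_profilewise_general {u : N → (∀ j, A j) → ℝ}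
    {q : (∀ j, A j) → ℝ} (hq : IsCorrelatedEq u q)
    {f : (∀ j, A j) → ℝ} {η : ∀ i, A i → A i → ℝ} (hη : IsKernel η)
    (hIC : ∀ a : ∀ j, A j,
      ∑ i, u i a ≤
        (∑ i, ∑ b' : A i, η i (a i) b' * u i (Function.update a i b')) - f a) :
    ∑ a, q a * f a ≤ 0 := by
  have fee_le (a : ∀ j, A j) : f a ≤ -∑ i, deviationLoss (u i) (η i) a := by
    simp only [deviationLoss_eq_sub _ (hη _ (a _)).2, sum_sub_distrib]
    linarith [hIC a]
  calc ∑ a, q a * f a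
      ≤ ∑ a, q a * -∑ i, deviationLoss (u i) (η i) a :=
        sum_le_sum fun a _ => mul_le_mul_of_nonneg_left (fee_le a) (hq.1 a)
    _ = -∑ i, ∑ a, q a * deviationLoss (u i) (η i) a := by
        simp only [mul_neg, sum_neg_distrib, mul_sum]
        rw [sum_comm]
    _ ≤ 0 := neg_nonpos.mpr <| sum_nonneg fun i _ =>
        hq.sum_mul_deviationLoss_nonneg fun b => (hη i b).1

end

theorem nash_unexploitable_profilewise
    (u : ∀ i : N, (∀ j, A j) → ℝ) (p : ∀ i, A i → ℝ) (hp : IsMarginalProfile p)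
    (hN : IsNashEq u p)
    (f : (∀ j, A j) → ℝ) (η : ∀ i, A i → A i → ℝ) (hη : IsKernel η)
    (hIC : ∀ a : ∀ j, A j,
      ∑ i, u i a ≤
        (∑ i, ∑ b' : A i, η i (a i) b' * u i (Function.update a i b')) - f a) :
    ∑ a : ∀ j, A j, (∏ i, p i (a i)) * f a ≤ 0 :=
  nash_unexploitable_profilewise_general (hN.isCorrelatedEq_prod hp) hη hIC
end

section
/- Let (N, (A_i)_{i∈N}, (u_i)_{i∈N}) be a finite simultaneous-move game. Suppose there exist nonnegative coefficients η_i(a_i, a_i') ≥ 0 (for each player i and a_i, a_i' ∈ A_i) and a function f : ∏_i A_i → ℝ and a marginal strategy profile p such that Σ_a f(a) ∏_i p_i(a_i) < 0 and, for all a ∈ ∏_i A_i, f(a) ≥ Σ_{i∈N} Σ_{a_i'∈A_i} η_i(a_i, a_i')[u_i(a) − u_i(a_i', a_{-i})]. Then there exist stochastic kernels η̃_i : A_i → Δ(A_i) (each row η̃_i(a_i, ·) a probability distribution on A_i) and a function f̃ : ∏_i A_i → ℝ such that Σ_a f̃(a) ∏_i p_i(a_i) < 0 and, for all a ∈ ∏_i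 A_i, f̃(a) ≥ Σ_{i∈N} [u_i(a) − Σ_{a_i'∈A_i} η̃_i(a_i, a_i') u_i(a_i', a_{-i})]. -/
open Finset

variable {N : Type*} [Fintype N] [Nonempty N] [DecidableEq N]
  {A : N → Type*} [∀ i, Fintype (A i)] [∀ i, Nonempty (A i)] [∀ i, DecidableEq (A i)]

/-! Scaling `η` and `f` by a common `r > 0` preserves the assumptions, and since there are finitely
many rows, a small `r` makes every row of `r • η` sum to at most one. The missing mass can then be
put on the diagonal: a player deviating to the action already played gains nothing, so the
weighted sums of utility differences are unchanged. -/

section LazyDistribution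

variable {R α : Type*} [Ring R] [Fintype α] [DecidableEq α]

/-- The law of one step of the lazy chain started at `b`: it jumps to `c` with weight
`r * w c`, and the mass missing from a total of `1` is added at `b`. It turns nonnegative jump
weights `w` into a probability distribution as soon as `r * ∑ c, w c ≤ 1`. -/
def lazyDistribution (r : R) (w : α → R) (b : α) : α → R :=
  r • w + Pi.single b (1 - r * ∑ c, w c)

theorem lazyDistribution_mem_stdSimplex [PartialOrder R] [IsOrderedRing R] {r : R} {w : α → R}
    (hr : 0 ≤ r) (hw : 0 ≤ w) (hrw : r * ∑ c, w c ≤ 1) (b : α) :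
    lazyDistribution r w b ∈ stdSimplex R α := by
  refine ⟨?_, ?_⟩
  · exact add_nonneg (smul_nonneg hr hw) (Pi.single_nonneg.2 (sub_nonneg.2 hrw))
  · simp only [lazyDistribution, Pi.add_apply, Pi.smul_apply, smul_eq_mul, sum_add_distrib,
      ← mul_sum, sum_pi_single', mem_univ, if_true, add_sub_cancel]

theorem sub_sum_lazyDistribution_mul (r : R) (w : α → R) (b : α) (v : α → R) :
    v b - ∑ c, lazyDistribution r w b c * v c = r * ∑ c, w c * (v b - v c) := by
  have expectation : ∑ c, lazyDistribution r w b c * v c =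
      r * ∑ c, w c * v c + (1 - r * ∑ c, w c) * v b := by
    simp only [lazyDistribution, Pi.add_apply, Pi.smul_apply, smul_eq_mul, add_mul,
      sum_add_distrib, mul_assoc, ← mul_sum, Pi.single_apply, ite_mul, zero_mul, sum_ite_eq',
      mem_univ, if_true]
  simp only [expectation, mul_sub, sum_sub_distrib, ← sum_mul, sub_mul, one_mul, mul_assoc]
  abel

end LazyDistribution

theorem exists_pos_forall_mul_le_one {𝕜 κ : Type*} [Field 𝕜] [LinearOrder 𝕜]
    [IsStrictOrderedRing 𝕜] [Finite κ] (x : κ → 𝕜) : ∃ r, 0 < r ∧ ∀ k, r * x k ≤ 1 := by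
  obtain ⟨C, hC⟩ := Finite.exists_le x
  have hpos : 0 < max C 1 := lt_max_of_lt_right one_pos
  exact ⟨(max C 1)⁻¹, inv_pos.2 hpos, fun k =>
    inv_mul_le_one_of_le₀ ((hC k).trans (le_max_left C 1)) hpos.le⟩

theorem normalize_multipliers_to_kernels_general
    {ι : Type*} [Fintype ι] [DecidableEq ι] {α : ι → Type*} [∀ i, Fintype (α i)]
    (u : ι → (∀ j, α j) → ℝ) (w : (∀ j, α j) → ℝ)
    (η : ∀ i, α i → α i → ℝ) (hη : ∀ i (b b' : α i), 0 ≤ η i b b')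
    (f : (∀ j, α j) → ℝ) (hf : ∑ a, f a * w a < 0)
    (hgain : ∀ a : ∀ j, α j,
      ∑ i, ∑ b' : α i, η i (a i) b' * (u i a - u i (Function.update a i b')) ≤ f a) :
    ∃ (η' : ∀ i, α i → α i → ℝ) (f' : (∀ j, α j) → ℝ),
      IsKernel η' ∧
      (∑ a, f' a * w a < 0) ∧
      ∀ a : ∀ j, α j,
        ∑ i, (u i a - ∑ b' : α i, η' i (a i) b' * u i (Function.update a i b')) ≤ f' a := by
  classical
  obtain ⟨r, hr, hrη⟩ :=
    exists_pos_forall_mul_le_one fun k : Σ i, α i => ∑ b', η k.1 k.2 b'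
  refine ⟨fun i b => lazyDistribution r (η i b) b, r • f, fun i b =>
    lazyDistribution_mem_stdSimplex hr.le (hη i b) (hrη ⟨i, b⟩) b, ?_, fun a => ?_⟩
  · simpa only [Pi.smul_apply, smul_eq_mul, mul_assoc, ← mul_sum] using
      mul_neg_of_pos_of_neg hr hf
  · have row (i : ι) := sub_sum_lazyDistribution_mul r (η i (a i)) (a i)
      fun b' => u i (Function.update a i b')
    simp only [Function.update_eq_self] at row
    simp only [row, ← mul_sum]
    exact mul_le_mul_of_nonneg_left (hgain a) hr.le

theorem normalize_multipliers_to_kernels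
    (u : ∀ i : N, (∀ j, A j) → ℝ) (p : ∀ i, A i → ℝ) (hp : IsMarginalProfile p)
    (η : ∀ i, A i → A i → ℝ) (hη : ∀ i (b b' : A i), 0 ≤ η i b b')
    (f : (∀ j, A j) → ℝ)
    (h1 : ∑ a : ∀ j, A j, f a * ∏ i, p i (a i) < 0)
    (h2 : ∀ a : ∀ j, A j,
      ∑ i, ∑ b' : A i, η i (a i) b' * (u i a - u i (Function.update a i b')) ≤ f a) :
    ∃ (η' : ∀ i, A i → A i → ℝ) (f' : (∀ j, A j) → ℝ),
      IsKernel η' ∧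
      (∑ a : ∀ j, A j, f' a * ∏ i, p i (a i) < 0) ∧
      ∀ a : ∀ j, A j,
        ∑ i, (u i a - ∑ b' : A i, η' i (a i) b' * u i (Function.update a i b')) ≤
          f' a :=
  normalize_multipliers_to_kernels_general u (fun a => ∏ i, p i (a i)) η hη f h1 h2
end
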